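/- Assume the region where V = β is nonempty, and let η be a cut-off function with constant C_η. Then there is a constant C depending only on d and C_η such that for every periodic Lipschitz function v : ℝ^d → ℝ one has ‖ηv‖ ≤ C · κ L^d · (εL) · ‖∇(ηv)‖_{L²([0,1)^d)}, where κ and L are the overlap number and the maximal valley width of the potential. (Friedrichs-type inequality for truncated functions, Lemma 2.3 of the paper.) -/

import Mathlib

open MeasureTheory Real
open scoped BigOperators RealInnerProductSpace

noncomputable section

/-- A function on `ℝ^d` is periodic if it is `ℤ^d`-periodic. -/
def ZPeriodic {d : ℕ} (f : (Fin d → ℝ) → ℝ) : Prop :=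
  ∀ (x : Fin d → ℝ) (k : Fin d → ℤ), f (x + fun i => (k i : ℝ)) = f x

/-- The unit cell `[0,1)^d`. -/
def unitCell (d : ℕ) : Set (Fin d → ℝ) := Set.univ.pi fun _ => Set.Ico (0 : ℝ) 1

/-- Squared Euclidean norm `|∇f(x)|²` of the (a.e. defined) gradient of `f`. -/
def gradSq {d : ℕ} (f : (Fin d → ℝ) → ℝ) (x : Fin d → ℝ) : ℝ :=
  ∑ i, (fderiv ℝ f x (Pi.single i 1)) ^ 2

/-- `‖v‖²`, the squared `L²` norm over the unit cell. -/
def l2sq {d : ℕ} (v : (Fin d → ℝ) → ℝ) : ℝ := ∫ x in unitCell d, (v x) ^ 2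

/-- `‖∇v‖²_{L²([0,1)^d)}`. -/
def gradL2sq {d : ℕ} (v : (Fin d → ℝ) → ℝ) : ℝ := ∫ x in unitCell d, gradSq v x

/-- `|||v|||²`, the squared energy norm over the unit cell. -/
def energySq {d : ℕ} (V v : (Fin d → ℝ) → ℝ) : ℝ :=
  ∫ x in unitCell d, (gradSq v x + V x * (v x) ^ 2)

/-- The open grid cell of side `ε` with lower-left corner `ε q`. -/
def gridCell {d : ℕ} (ε : ℝ) (q : Fin d → ℤ) : Set (Fin d → ℝ) :=
  {x | ∀ i, (q i : ℝ) * ε < x i ∧ x i < ((q i : ℝ) + 1) * ε}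

/-- `V` is a periodic two-valued potential, constant on each (open) grid cell. -/
def IsGridPotential {d : ℕ} (ε α β : ℝ) (V : (Fin d → ℝ) → ℝ) : Prop :=
  ZPeriodic V ∧ (∀ x, V x = α ∨ V x = β) ∧
    ∀ q : Fin d → ℤ, (∀ x ∈ gridCell ε q, V x = α) ∨ (∀ x ∈ gridCell ε q, V x = β)

/-- The axis-aligned closed cube of side `ε m` which is the union of the grid cells
`q + r`, `r ∈ {0, …, m-1}^d`. -/
def gridCube {d : ℕ} (ε : ℝ) (q : Fin d → ℤ) (m : ℕ) : Set (Fin d → ℝ) :=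
  {x | ∀ i, (q i : ℝ) * ε ≤ x i ∧ x i ≤ ((q i : ℝ) + (m : ℝ)) * ε}

/-- An α-cube: a closed cube, union of grid cells, contained in `closure {V = α}`. -/
def IsAlphaCube {d : ℕ} (ε α : ℝ) (V : (Fin d → ℝ) → ℝ) (q : Fin d → ℤ) (m : ℕ) : Prop :=
  1 ≤ m ∧ gridCube ε q m ⊆ closure {x | V x = α}

/-- A maximal α-cube: an α-cube maximal under inclusion among α-cubes. -/
def IsMaxAlphaCube {d : ℕ} (ε α : ℝ) (V : (Fin d → ℝ) → ℝ) (q : Fin d → ℤ) (m : ℕ) : Prop :=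
  IsAlphaCube ε α V q m ∧ ∀ q' m', IsAlphaCube ε α V q' m' →
    gridCube ε q m ⊆ gridCube ε q' m' → gridCube ε q m = gridCube ε q' m'

/-- `ε L` is the largest side length of a maximal α-cube (with `L = 1` if no α-cube exists):
the maximal width of a potential valley. -/
def IsValleyWidth {d : ℕ} (ε α : ℝ) (V : (Fin d → ℝ) → ℝ) (L : ℕ) : Prop :=
  IsGreatest {m | ∃ q, IsMaxAlphaCube ε α V q m} L ∨
    ((∀ q m, ¬ IsAlphaCube ε α V q m) ∧ L = 1)

/-- `κ` is the maximal number of maximal α-cubes containing a common α-grid cell. -/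
def IsOverlapNumber {d : ℕ} (ε α : ℝ) (V : (Fin d → ℝ) → ℝ) (κ : ℕ) : Prop :=
  IsGreatest {n | ∃ q : Fin d → ℤ, (∀ x ∈ gridCell ε q, V x = α) ∧
    n = Nat.card {p : (Fin d → ℤ) × ℕ //
      IsMaxAlphaCube ε α V p.1 p.2 ∧ gridCell ε q ⊆ gridCube ε p.1 p.2}} κ

/-- A cut-off function `η` with constant `Cη`: periodic, `C¹`, `[0,1]`-valued, equal to `1`
on every α-cell, vanishing on the closed concentric subcube of side `ε/2` of every β-cell,
with `‖∇η‖_∞ ≤ Cη / ε`. -/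
structure IsCutoff {d : ℕ} (ε Cη α β : ℝ) (V η : (Fin d → ℝ) → ℝ) : Prop where
  periodic : ZPeriodic η
  contDiff : ContDiff ℝ 1 η
  mem_Icc : ∀ x, η x ∈ Set.Icc (0 : ℝ) 1
  eq_one : ∀ q : Fin d → ℤ, (∀ x ∈ gridCell ε q, V x = α) → ∀ x ∈ gridCell ε q, η x = 1
  eq_zero : ∀ q : Fin d → ℤ, (∀ x ∈ gridCell ε q, V x = β) → ∀ x : Fin d → ℝ,
    (∀ i, ((q i : ℝ) + 1/4) * ε ≤ x i ∧ x i ≤ ((q i : ℝ) + 3/4) * ε) → η x = 0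
  grad_le : ∀ x, ‖fderiv ℝ η x‖ ≤ Cη / ε


/-!
Every cube of side `(L + 2) ε` contains `L + 1` full grid cells in each direction. They cannot all
be α-cells, so the cube contains the core of a β-cell, where `w = η v` vanishes. Hence for each `x`
there is a set of shifts `h ∈ [0, (L + 2) ε]^d` of volume at least `(ε / 2) ^ d` for which
`|w x|² = |w (x + h) - w x|²`. Integrating over `h` and `x` reduces the inequality to the
translation estimate `∫ |w (x + h) - w x|² ≤ |h|² ∫ |∇w|²`, which is the Cauchy–Schwarz inequality
along the segment from `x` to `x + h` together with the translation invariance of integrals over a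
period.
-/

section TranslationEstimate

theorem enorm_integral_sq_le {α F : Type*} [MeasurableSpace α] [NormedAddCommGroup F]
    [NormedSpace ℝ F] {μ : Measure α} {f : α → F} (hf : AEStronglyMeasurable f μ) :
    ‖∫ x, f x ∂μ‖ₑ ^ 2 ≤ μ Set.univ * ∫⁻ x, ‖f x‖ₑ ^ 2 ∂μ := by
  have holder := ENNReal.lintegral_mul_le_Lp_mul_Lq μ Real.HolderConjugate.two_two
    (aemeasurable_const (b := (1 : ENNReal))) hf.enorm
  calc ‖∫ x, f x ∂μ‖ₑ ^ 2
    _ ≤ (∫⁻ x, ‖f x‖ₑ ∂μ) ^ 2 := by gcongr; exact enorm_integral_le_lintegral_enorm f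
    _ ≤ ((μ Set.univ) ^ (1 / 2 : ℝ) * (∫⁻ x, ‖f x‖ₑ ^ 2 ∂μ) ^ (1 / 2 : ℝ)) ^ 2 := by
        gcongr; simpa using holder
    _ = μ Set.univ * ∫⁻ x, ‖f x‖ₑ ^ 2 ∂μ := by simp [mul_pow, ← ENNReal.rpow_mul_natCast]

theorem enorm_sub_sq_le_lintegral_deriv {f : ℝ → ℝ} {a b : ℝ} (hab : a ≤ b)
    (hf : AbsolutelyContinuousOnInterval f a b) :
    ‖f b - f a‖ₑ ^ 2 ≤ ENNReal.ofReal (b - a) * ∫⁻ t in Set.Ioc a b, ‖deriv f t‖ₑ ^ 2 := by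
  have h := enorm_integral_sq_le (μ := volume.restrict (Set.Ioc a b))
    (measurable_deriv f).aestronglyMeasurable
  rwa [← intervalIntegral.integral_of_le hab, hf.integral_deriv_eq_sub,
    Measure.restrict_apply_univ, Real.volume_Ioc] at h

open scoped Pointwise in
theorem setLIntegral_comp_add_right_of_invariant {E : Type*} [AddCommGroup E]
    [MeasurableSpace E] [MeasurableAdd E] {μ : Measure E} [μ.IsAddLeftInvariant]
    {G : AddSubgroup E} [Countable G] {s : Set E} {f : E → ENNReal}
    (hs : IsAddFundamentalDomain G s μ) (hf : ∀ g ∈ G, ∀ x, f (x + g) = f x) (a : E) :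
    ∫⁻ x in s, f (x + a) ∂μ = ∫⁻ x in s, f x ∂μ := by
  have translated : ∫⁻ x in a +ᵥ s, f x ∂μ = ∫⁻ x in s, f x ∂μ :=
    (hs.vadd_of_comm a).setLIntegral_eq hs f fun g x => by
      rw [AddSubgroup.vadd_def, vadd_eq_add, add_comm, hf g g.2]
  calc ∫⁻ x in s, f (x + a) ∂μ
    _ = ∫⁻ x in s, f (a + x) ∂μ := by simp only [add_comm]
    _ = ∫⁻ x in a +ᵥ s, f x ∂μ :=
        (measurePreserving_add_left μ a).setLIntegral_comp_emb (measurableEmbedding_addLeft a) f s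
    _ = ∫⁻ x in s, f x ∂μ := translated

variable {E : Type*} [NormedAddCommGroup E] [NormedSpace ℝ E] {w : E → ℝ} {K : NNReal}

theorem lineDeriv_add_smul (w : E → ℝ) (x h : E) (t : ℝ) :
    lineDeriv ℝ w (x + t • h) h = deriv (fun s : ℝ => w (x + s • h)) t := by
  have shift : (fun s : ℝ => w (x + t • h + s • h)) = fun s => w (x + (s + t) • h) := by
    simp only [add_smul, add_assoc, add_comm (t • h)]
  rw [lineDeriv, shift, deriv_comp_add_const (f := fun s : ℝ => w (x + s • h)), zero_add]

theorem enorm_add_sub_sq_le_lintegral_lineDeriv (hw : LipschitzWith K w) (x h : E) :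
    ‖w (x + h) - w x‖ₑ ^ 2 ≤ ∫⁻ t in Set.Ioc (0 : ℝ) 1, ‖lineDeriv ℝ w (x + t • h) h‖ₑ ^ 2 := by
  have segment_lipschitz : LipschitzWith ‖h‖₊ fun t : ℝ => x + t • h :=
    LipschitzWith.of_dist_le_mul fun s t => by
      rw [dist_add_left, dist_eq_norm, ← sub_smul, norm_smul, dist_eq_norm, mul_comm, coe_nnnorm]
  have ac := ((hw.comp segment_lipschitz).lipschitzOnWith
    (s := Set.uIcc 0 1)).absolutelyContinuousOnInterval
  simpa [lineDeriv_add_smul, Function.comp_def] using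
    enorm_sub_sq_le_lintegral_deriv zero_le_one ac

theorem setLIntegral_enorm_add_sub_sq_le [MeasurableSpace E] [BorelSpace E] {μ : Measure E}
    [SFinite μ] [μ.IsAddLeftInvariant] {G : AddSubgroup E} [Countable G] {s : Set E}
    (hs : IsAddFundamentalDomain G s μ) (hw : LipschitzWith K w)
    (hG : ∀ g ∈ G, ∀ x, w (x + g) = w x) (h : E) :
    ∫⁻ x in s, ‖w (x + h) - w x‖ₑ ^ 2 ∂μ ≤ ∫⁻ x in s, ‖lineDeriv ℝ w x h‖ₑ ^ 2 ∂μ := by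
  have meas : Measurable fun x => ‖lineDeriv ℝ w x h‖ₑ ^ 2 :=
    (measurable_lineDeriv hw.continuous).enorm.pow_const 2
  have inv (g) (hg : g ∈ G) (x : E) : lineDeriv ℝ w (x + g) h = lineDeriv ℝ w x h := by
    simp only [lineDeriv, add_right_comm x g, hG g hg]
  calc ∫⁻ x in s, ‖w (x + h) - w x‖ₑ ^ 2 ∂μ
    _ ≤ ∫⁻ x in s, (∫⁻ t in Set.Ioc (0 : ℝ) 1, ‖lineDeriv ℝ w (x + t • h) h‖ₑ ^ 2) ∂μ :=
        lintegral_mono fun x => enorm_add_sub_sq_le_lintegral_lineDeriv hw x h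
    _ = ∫⁻ t in Set.Ioc (0 : ℝ) 1, ∫⁻ x in s, ‖lineDeriv ℝ w (x + t • h) h‖ₑ ^ 2 ∂μ := by
        have flow : Continuous fun p : E × ℝ => p.1 + p.2 • h := by fun_prop
        exact lintegral_lintegral_swap (meas.comp flow.measurable).aemeasurable
    _ = ∫⁻ _ in Set.Ioc (0 : ℝ) 1, ∫⁻ x in s, ‖lineDeriv ℝ w x h‖ₑ ^ 2 ∂μ :=
        lintegral_congr fun t => setLIntegral_comp_add_right_of_invariant
          (f := fun x => ‖lineDeriv ℝ w x h‖ₑ ^ 2) hs (fun g hg x => by rw [inv g hg]) (t • h)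
    _ = ∫⁻ x in s, ‖lineDeriv ℝ w x h‖ₑ ^ 2 ∂μ := by simp

end TranslationEstimate

theorem mul_setLIntegral_enorm_sq_le_of_le_measure_zeros {E F : Type*} [AddCommGroup E]
    [MeasurableSpace E] [MeasurableAdd₂ E] [NormedAddCommGroup F] [MeasurableSpace F]
    [BorelSpace F] [SecondCountableTopology F] {μ ν : Measure E} [SFinite μ] [SFinite ν]
    {w : E → F} (hw : Measurable w) (s H : Set E) {m : ENNReal}
    (hm : ∀ x, m ≤ ν (H ∩ {h | w (x + h) = 0})) :
    m * ∫⁻ x in s, ‖w x‖ₑ ^ 2 ∂μ ≤ ∫⁻ h in H, ∫⁻ x in s, ‖w (x + h) - w x‖ₑ ^ 2 ∂μ ∂ν := by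
  have zeros_measurable (x : E) : MeasurableSet {h | w (x + h) = 0} :=
    (hw.comp (measurable_const_add x)) (measurableSet_singleton 0)
  have pointwise (x : E) : m * ‖w x‖ₑ ^ 2 ≤ ∫⁻ h in H, ‖w (x + h) - w x‖ₑ ^ 2 ∂ν := calc
    m * ‖w x‖ₑ ^ 2 ≤ ∫⁻ _ in H ∩ {h | w (x + h) = 0}, ‖w x‖ₑ ^ 2 ∂ν := by
        rw [setLIntegral_const, mul_comm]; gcongr; exact hm x
    _ = ∫⁻ h in {h | w (x + h) = 0}, ‖w (x + h) - w x‖ₑ ^ 2 ∂ν.restrict H := by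
        rw [Set.inter_comm, ← Measure.restrict_restrict (zeros_measurable x)]
        refine setLIntegral_congr_fun (zeros_measurable x) fun h (hh : w (x + h) = 0) => ?_
        simp only [hh, zero_sub, enorm_neg]
    _ ≤ ∫⁻ h in H, ‖w (x + h) - w x‖ₑ ^ 2 ∂ν := setLIntegral_le_lintegral _ _
  calc m * ∫⁻ x in s, ‖w x‖ₑ ^ 2 ∂μ
    _ = ∫⁻ x in s, m * ‖w x‖ₑ ^ 2 ∂μ := (lintegral_const_mul m (hw.enorm.pow_const 2)).symm
    _ ≤ ∫⁻ x in s, ∫⁻ h in H, ‖w (x + h) - w x‖ₑ ^ 2 ∂ν ∂μ := lintegral_mono pointwise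
    _ = ∫⁻ h in H, ∫⁻ x in s, ‖w (x + h) - w x‖ₑ ^ 2 ∂μ ∂ν := by
        refine lintegral_lintegral_swap (Measurable.aemeasurable ?_)
        exact ((hw.comp measurable_add).sub (hw.comp measurable_fst)).enorm.pow_const 2


section UnitCell

variable {d : ℕ} {w : (Fin d → ℝ) → ℝ} {K : NNReal}

/-- The lattice `ℤ^d`, as an additive subgroup of `ℝ^d` for which `unitCell d` is a fundamental
domain. It is spelled as a `ℤ`-span because that is the form in which the library provides
fundamental domains. -/
abbrev integerLattice (d : ℕ) : AddSubgroup (Fin d → ℝ) :=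
  (Submodule.span ℤ (Set.range (Pi.basisFun ℝ (Fin d)))).toAddSubgroup

instance countable_integerLattice (d : ℕ) : Countable (integerLattice d) :=
  inferInstanceAs (Countable (Submodule.span ℤ (Set.range (Pi.basisFun ℝ (Fin d)))))

theorem isAddFundamentalDomain_unitCell (d : ℕ) :
    IsAddFundamentalDomain (integerLattice d) (unitCell d) := by
  rw [unitCell, ← ZSpan.fundamentalDomain_pi_basisFun]
  exact ZSpan.isAddFundamentalDomain' _ _

theorem ZPeriodic.add_mem_integerLattice (hper : ZPeriodic w) {g : Fin d → ℝ}
    (hg : g ∈ integerLattice d) (x : Fin d → ℝ) : w (x + g) = w x := by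
  choose k hk using ((Pi.basisFun ℝ (Fin d)).mem_span_iff_repr_mem ℤ g).1 hg
  have coords : g = fun i => (k i : ℝ) := funext fun i => by simpa using (hk i).symm
  rw [coords, hper]

theorem unitCell_subset_Icc (d : ℕ) : unitCell d ⊆ Set.Icc 0 1 :=
  fun _ hx => ⟨fun i => (hx i trivial).1, fun i => (hx i trivial).2.le⟩

theorem gradSq_nonneg (w : (Fin d → ℝ) → ℝ) (x : Fin d → ℝ) : 0 ≤ gradSq w x :=
  Finset.sum_nonneg fun _ _ => sq_nonneg _

theorem measurable_gradSq (w : (Fin d → ℝ) → ℝ) : Measurable (gradSq w) :=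
  Finset.measurable_sum _ fun _ _ => (measurable_fderiv_apply_const ℝ w _).pow_const 2

theorem gradSq_le_of_lipschitzWith (hw : LipschitzWith K w) (x : Fin d → ℝ) :
    gradSq w x ≤ d * (K : ℝ) ^ 2 := by
  have partial_le (i : Fin d) : |fderiv ℝ w x (Pi.single i 1)| ≤ K := by
    simpa [Pi.norm_single] using
      (fderiv ℝ w x).le_of_opNorm_le (norm_fderiv_le_of_lipschitz ℝ hw) (Pi.single i 1)
  calc gradSq w x ≤ ∑ _ : Fin d, (K : ℝ) ^ 2 :=
        Finset.sum_le_sum fun i _ => sq_le_sq.2 ((partial_le i).trans (le_abs_self _))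
    _ = d * (K : ℝ) ^ 2 := by simp

theorem sq_fderiv_apply_le_mul_gradSq (w : (Fin d → ℝ) → ℝ) (x h : Fin d → ℝ) :
    (fderiv ℝ w x h) ^ 2 ≤ (∑ i, h i ^ 2) * gradSq w x := by
  have expand : fderiv ℝ w x h = ∑ i, h i * fderiv ℝ w x (Pi.single i 1) := by
    conv_lhs => rw [pi_eq_sum_univ' h]
    simp only [map_sum, map_smul, smul_eq_mul]
  rw [expand]
  exact Finset.sum_mul_sq_le_sq_mul_sq _ _ _

theorem enorm_sq_eq_ofReal_sq (r : ℝ) : ‖r‖ₑ ^ 2 = ENNReal.ofReal (r ^ 2) := by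
  rw [← enorm_pow, Real.enorm_of_nonneg (sq_nonneg r)]

theorem ofReal_l2sq (hw : Continuous w) :
    ENNReal.ofReal (l2sq w) = ∫⁻ x in unitCell d, ‖w x‖ₑ ^ 2 := by
  have integrable : IntegrableOn (fun x => w x ^ 2) (unitCell d) :=
    (hw.pow 2).integrableOn_Icc.mono_set (unitCell_subset_Icc d)
  simp only [enorm_sq_eq_ofReal_sq]
  exact ofReal_integral_eq_lintegral_ofReal integrable (.of_forall fun _ => sq_nonneg _)

theorem ofReal_gradL2sq (hw : LipschitzWith K w) :
    ENNReal.ofReal (gradL2sq w) = ∫⁻ x in unitCell d, ENNReal.ofReal (gradSq w x) := by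
  have integrable : IntegrableOn (gradSq w) (unitCell d) := by
    refine Measure.integrableOn_of_bounded (M := d * (K : ℝ) ^ 2) ?_
      (measurable_gradSq w).aestronglyMeasurable (.of_forall fun x => ?_)
    · exact measure_ne_top_of_subset (unitCell_subset_Icc d) isCompact_Icc.measure_ne_top
    · rw [Real.norm_of_nonneg (gradSq_nonneg w x)]
      exact gradSq_le_of_lipschitzWith hw x
  exact ofReal_integral_eq_lintegral_ofReal integrable (.of_forall (gradSq_nonneg w))

theorem setLIntegral_unitCell_enorm_add_sub_sq_le (hw : LipschitzWith K w) (hper : ZPeriodic w)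
    (h : Fin d → ℝ) :
    ∫⁻ x in unitCell d, ‖w (x + h) - w x‖ₑ ^ 2 ≤
      ENNReal.ofReal (∑ i, h i ^ 2) * ENNReal.ofReal (gradL2sq w) := by
  have sum_nonneg : 0 ≤ ∑ i, h i ^ 2 := Finset.sum_nonneg fun _ _ => sq_nonneg _
  calc ∫⁻ x in unitCell d, ‖w (x + h) - w x‖ₑ ^ 2
    _ ≤ ∫⁻ x in unitCell d, ‖lineDeriv ℝ w x h‖ₑ ^ 2 :=
        setLIntegral_enorm_add_sub_sq_le (isAddFundamentalDomain_unitCell d) hw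
          (fun _ hg => hper.add_mem_integerLattice hg) h
    _ ≤ ∫⁻ x in unitCell d, ENNReal.ofReal (∑ i, h i ^ 2) * ENNReal.ofReal (gradSq w x) := by
        refine lintegral_mono_ae (ae_restrict_of_ae ?_)
        filter_upwards [hw.ae_differentiableAt (μ := volume)] with x hx
        rw [hx.lineDeriv_eq_fderiv, enorm_sq_eq_ofReal_sq, ← ENNReal.ofReal_mul sum_nonneg]
        exact ENNReal.ofReal_le_ofReal (sq_fderiv_apply_le_mul_gradSq w x h)
    _ = ENNReal.ofReal (∑ i, h i ^ 2) * ENNReal.ofReal (gradL2sq w) := by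
        rw [lintegral_const_mul _ (measurable_gradSq w).ennreal_ofReal, ofReal_gradL2sq hw]

theorem volume_Icc_add_const (x : Fin d → ℝ) (ℓ : ℝ) :
    volume (Set.Icc x fun i => x i + ℓ) = ENNReal.ofReal ℓ ^ d := by
  simp [Real.volume_Icc_pi]

theorem mul_l2sq_le_of_le_volume_zeros (hw : LipschitzWith K w) (hper : ZPeriodic w) {ℓ m : ℝ}
    (hℓ : 0 ≤ ℓ) (hm : 0 ≤ m)
    (hz : ∀ x, ENNReal.ofReal m ≤ volume ((Set.Icc x fun i => x i + ℓ) ∩ {y | w y = 0})) :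
    m * l2sq w ≤ d * ℓ ^ 2 * ℓ ^ d * gradL2sq w := by
  let H : Set (Fin d → ℝ) := Set.Icc 0 fun _ => ℓ
  have gradL2sq_nonneg : 0 ≤ gradL2sq w := integral_nonneg (gradSq_nonneg w)
  have volume_H : volume H = ENNReal.ofReal (ℓ ^ d) := by
    simpa [H, ENNReal.ofReal_pow hℓ] using volume_Icc_add_const (0 : Fin d → ℝ) ℓ
  have zeros (x : Fin d → ℝ) : ENNReal.ofReal m ≤ volume (H ∩ {h | w (x + h) = 0}) := by
    have preimage : H ∩ {h | w (x + h) = 0} =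
        (x + ·) ⁻¹' ((Set.Icc x fun i => x i + ℓ) ∩ {y | w y = 0}) := by
      ext h; simp [H, Pi.le_def]
    rw [preimage, measure_preimage_add]
    exact hz x
  have shift_le (h) (hh : h ∈ H) : ∑ i, h i ^ 2 ≤ d * ℓ ^ 2 := by
    simpa using Finset.sum_le_sum fun i (_ : i ∈ Finset.univ) =>
      pow_le_pow_left₀ (hh.1 i) (hh.2 i) 2
  rw [← ENNReal.ofReal_le_ofReal_iff (by positivity)]
  calc ENNReal.ofReal (m * l2sq w)
    _ = ENNReal.ofReal m * ∫⁻ x in unitCell d, ‖w x‖ₑ ^ 2 := by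
        rw [ENNReal.ofReal_mul hm, ofReal_l2sq hw.continuous]
    _ ≤ ∫⁻ h in H, ∫⁻ x in unitCell d, ‖w (x + h) - w x‖ₑ ^ 2 :=
        mul_setLIntegral_enorm_sq_le_of_le_measure_zeros hw.continuous.measurable _ _ zeros
    _ ≤ ∫⁻ _ in H, ENNReal.ofReal (d * ℓ ^ 2) * ENNReal.ofReal (gradL2sq w) :=
        setLIntegral_mono measurable_const fun h hh =>
          (setLIntegral_unitCell_enorm_add_sub_sq_le hw hper h).trans <| by
            gcongr; exact shift_le h hh
    _ = ENNReal.ofReal (d * ℓ ^ 2 * ℓ ^ d * gradL2sq w) := by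
        rw [setLIntegral_const, volume_H, ← ENNReal.ofReal_mul (by positivity),
          ← ENNReal.ofReal_mul (by positivity)]
        ring_nf

end UnitCell


section Bounded

theorem lipschitzWith_mul_of_nnnorm_le {X R : Type*} [PseudoMetricSpace X]
    [NonUnitalSeminormedRing R] {f g : X → R} {A B Kf Kg : NNReal} (hf : LipschitzWith Kf f)
    (hg : LipschitzWith Kg g) (hA : ∀ x, ‖f x‖₊ ≤ A) (hB : ∀ x, ‖g x‖₊ ≤ B) :
    LipschitzWith (A * Kg + Kf * B) fun x => f x * g x := by
  refine LipschitzWith.of_dist_le_mul fun x y => ?_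
  have hfA : ‖f x‖ ≤ A := hA x
  have hgB : ‖g y‖ ≤ B := hB y
  calc dist (f x * g x) (f y * g y)
    _ = ‖f x * (g x - g y) + (f x - f y) * g y‖ := by rw [dist_eq_norm]; congr 1; noncomm_ring
    _ ≤ ‖f x‖ * ‖g x - g y‖ + ‖f x - f y‖ * ‖g y‖ :=
        (norm_add_le _ _).trans (add_le_add (norm_mul_le _ _) (norm_mul_le _ _))
    _ ≤ A * (Kg * dist x y) + (Kf * dist x y) * B := by
        rw [← dist_eq_norm, ← dist_eq_norm]
        gcongr
        exacts [hg.dist_le_mul x y, hf.dist_le_mul x y]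
    _ = ↑(A * Kg + Kf * B) * dist x y := by push_cast; ring

theorem ZPeriodic.exists_nnnorm_le {d : ℕ} {v : (Fin d → ℝ) → ℝ} (hper : ZPeriodic v)
    (hv : Continuous v) : ∃ B : NNReal, ∀ x, ‖v x‖₊ ≤ B := by
  obtain ⟨B, hB⟩ := isCompact_Icc.exists_bound_of_continuousOn
    (hv.continuousOn (s := Set.Icc (0 : Fin d → ℝ) 1))
  refine ⟨B.toNNReal, fun x => ?_⟩
  have fract_eq : (x + fun i => ((-⌊x i⌋ : ℤ) : ℝ)) = fun i => Int.fract (x i) := by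
    ext i; simp [Int.fract, sub_eq_add_neg]
  rw [← hper x fun i => -⌊x i⌋, fract_eq]
  exact NNReal.le_toNNReal_of_coe_le
    (hB _ ⟨fun i => Int.fract_nonneg _, fun i => (Int.fract_lt_one _).le⟩)

end Bounded

section Grid

variable {d : ℕ} {ε α β c : ℝ} {V : (Fin d → ℝ) → ℝ} {p q : Fin d → ℤ} {k m n L κ : ℕ}

theorem gridCell_eq_pi (ε : ℝ) (q : Fin d → ℤ) :
    gridCell ε q = Set.univ.pi fun i => Set.Ioo (q i * ε) ((q i + 1) * ε) := by
  ext x; simp [gridCell]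

theorem gridCube_eq_Icc (ε : ℝ) (q : Fin d → ℤ) (m : ℕ) :
    gridCube ε q m = Set.Icc (fun i => q i * ε) fun i => (q i + m) * ε := by
  ext x; simp [gridCube, Pi.le_def, forall_and]

theorem isOpen_gridCell (ε : ℝ) (q : Fin d → ℤ) : IsOpen (gridCell ε q) := by
  rw [gridCell_eq_pi]
  exact isOpen_set_pi Set.finite_univ fun _ _ => isOpen_Ioo

theorem closure_gridCell (hε : 0 < ε) (q : Fin d → ℤ) :
    closure (gridCell ε q) = gridCube ε q 1 := by
  have side_ne (i : Fin d) : q i * ε ≠ (q i + 1) * ε := by linarith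
  simp only [gridCell_eq_pi, closure_pi_set, closure_Ioo (side_ne _), Set.pi_univ_Icc,
    gridCube_eq_Icc, Nat.cast_one]

theorem gridCube_subset_gridCube_iff (hε : 0 < ε) :
    gridCube ε q k ⊆ gridCube ε p m ↔ ∀ i, p i ≤ q i ∧ q i + k ≤ p i + m := by
  have corners_le : (fun i => q i * ε) ≤ fun i => (q i + k) * ε :=
    fun i => mul_le_mul_of_nonneg_right (by simp) hε.le
  rw [gridCube_eq_Icc, gridCube_eq_Icc, Set.Icc_subset_Icc_iff corners_le, Pi.le_def, Pi.le_def,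
    ← forall_and]
  simp only [mul_le_mul_iff_left₀ hε]
  norm_cast

theorem gridCell_subset_gridCube_iff (hε : 0 < ε) :
    gridCell ε p ⊆ gridCube ε q m ↔ ∀ i, q i ≤ p i ∧ p i + 1 ≤ q i + m := by
  have closed : IsClosed (gridCube ε q m) := gridCube_eq_Icc ε q m ▸ isClosed_Icc
  rw [← closed.closure_subset_iff, closure_gridCell hε, gridCube_subset_gridCube_iff hε,
    Nat.cast_one]

theorem gridCell_subset_gridCube_self (hε : 0 < ε) (q : Fin d → ℤ) (hm : 1 ≤ m) :
    gridCell ε q ⊆ gridCube ε q m :=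
  (gridCell_subset_gridCube_iff hε).2 fun _ => by omega

theorem exists_gridCell_of_mem_gridCube (hε : 0 < ε) (hm : 1 ≤ m) {x : Fin d → ℝ}
    (hx : x ∈ gridCube ε q m) :
    ∃ p, gridCell ε p ⊆ gridCube ε q m ∧ x ∈ closure (gridCell ε p) := by
  -- The minimum matters only on the upper faces of the cube, where `⌊x i / ε⌋ = q i + m`.
  let p : Fin d → ℤ := fun i => min ⌊x i / ε⌋ (q i + m - 1)
  have floor_ge (i : Fin d) : q i ≤ ⌊x i / ε⌋ := Int.le_floor.2 ((le_div_iff₀ hε).2 (hx i).1)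
  refine ⟨p, (gridCell_subset_gridCube_iff hε).2 fun i => ?_, ?_⟩
  · have := floor_ge i
    simp only [p]
    omega
  · rw [closure_gridCell hε]
    refine fun i => ⟨(le_div_iff₀ hε).1 (Int.le_floor.1 (min_le_left _ _)), ?_⟩
    rw [← div_le_iff₀ hε]
    have upper : x i / ε ≤ q i + m := (div_le_iff₀ hε).2 (hx i).2
    have floor_lt := Int.lt_floor_add_one (x i / ε)
    rcases min_choice ⌊x i / ε⌋ (q i + m - 1) with h | h <;> simp only [p, h] <;> push_cast <;>
      linarith

/-- The potential `V` has the value `c` on the open grid cell with index `q`. For `c = α` and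
`c = β` these are the α-cells and the β-cells. -/
abbrev IsValueCell (ε c : ℝ) (V : (Fin d → ℝ) → ℝ) (q : Fin d → ℤ) : Prop :=
  ∀ x ∈ gridCell ε q, V x = c

/-- The closed concentric subcube of side `ε / 2` of the grid cell with index `q`. -/
def cellCore (ε : ℝ) (q : Fin d → ℤ) : Set (Fin d → ℝ) :=
  Set.Icc (fun i => (q i + 1 / 4) * ε) fun i => (q i + 3 / 4) * ε

theorem cellCore_subset_gridCell (hε : 0 < ε) (q : Fin d → ℤ) :
    cellCore ε q ⊆ gridCell ε q := by
  intro x hx i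
  have lower := hx.1 i
  have upper := hx.2 i
  constructor <;> nlinarith

theorem volume_cellCore (ε : ℝ) (q : Fin d → ℤ) :
    volume (cellCore ε q) = ENNReal.ofReal (ε / 2) ^ d := by
  rw [← volume_Icc_add_const fun i => (q i + 1 / 4) * ε, cellCore]
  congr! 3
  ring

theorem cellCore_nonempty (hε : 0 < ε) (q : Fin d → ℤ) : (cellCore ε q).Nonempty :=
  Set.nonempty_Icc.2 fun i => by gcongr; norm_num

theorem gridCell_nonempty (hε : 0 < ε) (q : Fin d → ℤ) : (gridCell ε q).Nonempty :=
  (cellCore_nonempty hε q).mono (cellCore_subset_gridCell hε q)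

theorem isAlphaCube_iff (hε : 0 < ε) (hV : IsGridPotential ε α β V) :
    IsAlphaCube ε α V q m ↔
      1 ≤ m ∧ ∀ p, gridCell ε p ⊆ gridCube ε q m → IsValueCell ε α V p := by
  refine and_congr_right fun hm => ⟨fun hcube p hp => ?_, fun hcells x hx => ?_⟩
  · obtain ⟨z, hz⟩ := gridCell_nonempty hε p
    obtain ⟨y, hyp, hyα⟩ := mem_closure_iff.1 (hcube (hp hz)) _ (isOpen_gridCell ε p) hz
    refine (hV.2.2 p).elim id fun hpβ x hx => ?_
    rw [hpβ x hx, ← hpβ y hyp, hyα]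
  · obtain ⟨p, hp, hxp⟩ := exists_gridCell_of_mem_gridCube hε hm hx
    exact closure_mono (hcells p hp) hxp

theorem IsValueCell.add_period (hn : ε * n = 1) (hper : ZPeriodic V)
    (hp : IsValueCell ε c V p) (j : Fin d → ℤ) :
    IsValueCell ε c V fun i => p i + n * j i := by
  intro x hx
  rw [← hper x fun i => -j i]
  refine hp _ fun i => ?_
  have period : (n : ℝ) * j i * ε = j i := by linear_combination (j i : ℝ) * hn
  have hxi := hx i
  push_cast at hxi
  simp only [Pi.add_apply, Int.cast_neg]
  constructor <;> linarith

theorem IsAlphaCube.forall_isValueCell (hε : 0 < ε) (hn : ε * n = 1)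
    (hV : IsGridPotential ε α β V) (hA : IsAlphaCube ε α V q m) (hnm : n ≤ m) (p : Fin d → ℤ) :
    IsValueCell ε α V p := by
  have n_pos : (0 : ℤ) < n := by
    rcases n.eq_zero_or_pos with rfl | h
    · simp at hn
    · exact_mod_cast h
  let r : Fin d → ℤ := fun i => q i + (p i - q i) % n
  have hr : IsValueCell ε α V r := by
    refine ((isAlphaCube_iff hε hV).1 hA).2 r ((gridCell_subset_gridCube_iff hε).2 fun i => ?_)
    have nonneg := Int.emod_nonneg (p i - q i) n_pos.ne'
    have lt := Int.emod_lt_of_pos (p i - q i) n_pos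
    simp only [r]
    omega
  have hp : p = fun i => r i + n * ((p i - q i) / n) := by
    ext i
    have := Int.emod_add_mul_ediv (p i - q i) n
    simp only [r]
    linarith
  rw [hp]
  exact hr.add_period hn hV.1 _

theorem finite_alphaCubes_containing_gridCell (hε : 0 < ε) (hn : ε * n = 1)
    (hV : IsGridPotential ε α β V) (hp : ¬ IsValueCell ε α V p) (q : Fin d → ℤ) :
    {Q : (Fin d → ℤ) × ℕ |
      IsAlphaCube ε α V Q.1 Q.2 ∧ gridCell ε q ⊆ gridCube ε Q.1 Q.2}.Finite := by
  refine ((Set.finite_Icc (fun i => q i - n) q).prod (Set.finite_Iic n)).subset ?_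
  rintro ⟨r, m⟩ ⟨hA, hsub⟩
  have size_lt : m < n := lt_of_not_ge fun h => hp (hA.forall_isValueCell hε hn hV h p)
  have corner := (gridCell_subset_gridCube_iff hε).1 hsub
  refine ⟨⟨fun i => ?_, fun i => (corner i).1⟩, size_lt.le⟩
  have := (corner i).2
  simp only at this ⊢
  omega

theorem IsAlphaCube.exists_isMaxAlphaCube (hε : 0 < ε) (hn : ε * n = 1)
    (hV : IsGridPotential ε α β V) (hp : ¬ IsValueCell ε α V p) (hA : IsAlphaCube ε α V q m) :
    ∃ q' m', IsMaxAlphaCube ε α V q' m' ∧ gridCube ε q m ⊆ gridCube ε q' m' ∧ m ≤ m' := by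
  let S : Set ((Fin d → ℤ) × ℕ) :=
    {Q | IsAlphaCube ε α V Q.1 Q.2 ∧ gridCube ε q m ⊆ gridCube ε Q.1 Q.2}
  have S_finite : S.Finite := (finite_alphaCubes_containing_gridCell hε hn hV hp q).subset
    fun Q hQ => ⟨hQ.1, (gridCell_subset_gridCube_self hε q hA.1).trans hQ.2⟩
  obtain ⟨⟨q', m'⟩, ⟨hA', hsub⟩, hmax⟩ :=
    Set.exists_max_image S Prod.snd S_finite ⟨(q, m), hA, subset_rfl⟩
  refine ⟨q', m', ⟨hA', fun q'' m'' hA'' hsub' => hsub'.antisymm ?_⟩, hsub,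
    hmax (q, m) ⟨hA, subset_rfl⟩⟩
  have size_le : m'' ≤ m' := hmax (q'', m'') ⟨hA'', hsub.trans hsub'⟩
  refine (gridCube_subset_gridCube_iff hε).2 fun i => ?_
  have corners := (gridCube_subset_gridCube_iff hε).1 hsub' i
  omega

theorem IsOverlapNumber.one_le (hκ : IsOverlapNumber ε α V κ) (hε : 0 < ε) (hn : ε * n = 1)
    (hV : IsGridPotential ε α β V) (hp : ¬ IsValueCell ε α V p) : 1 ≤ κ := by
  obtain ⟨⟨q, hq, rfl⟩, -⟩ := hκ
  have cell_isAlphaCube : IsAlphaCube ε α V q 1 :=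
    ⟨le_rfl, closure_gridCell hε q ▸ closure_mono hq⟩
  obtain ⟨q', m', hmax, hsub, -⟩ := cell_isAlphaCube.exists_isMaxAlphaCube hε hn hV hp
  have finite : {Q : (Fin d → ℤ) × ℕ |
      IsMaxAlphaCube ε α V Q.1 Q.2 ∧ gridCell ε q ⊆ gridCube ε Q.1 Q.2}.Finite :=
    (finite_alphaCubes_containing_gridCell hε hn hV hp q).subset fun _ hQ => ⟨hQ.1.1, hQ.2⟩
  have nonempty : {Q : (Fin d → ℤ) × ℕ |
      IsMaxAlphaCube ε α V Q.1 Q.2 ∧ gridCell ε q ⊆ gridCube ε Q.1 Q.2}.Nonempty :=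
    ⟨(q', m'), hmax, (gridCell_subset_gridCube_self hε q le_rfl).trans hsub⟩
  exact (Set.ncard_pos finite).2 nonempty

theorem IsValleyWidth.one_le (hL : IsValleyWidth ε α V L) : 1 ≤ L := by
  rcases hL with ⟨⟨_, hQ⟩, -⟩ | ⟨-, rfl⟩
  exacts [hQ.1.1, le_rfl]

theorem IsValleyWidth.exists_isValueCell (hL : IsValleyWidth ε α V L) (hε : 0 < ε)
    (hn : ε * n = 1) (hV : IsGridPotential ε α β V) (hp : IsValueCell ε β V p) (q : Fin d → ℤ) :
    ∃ r, gridCell ε r ⊆ gridCube ε q (L + 1) ∧ IsValueCell ε β V r := by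
  by_contra! no_beta
  have cells_alpha (r) (hr : gridCell ε r ⊆ gridCube ε q (L + 1)) : IsValueCell ε α V r :=
    (hV.2.2 r).resolve_right (no_beta r hr)
  have hpα : ¬ IsValueCell ε α V p := fun hp' => by
    obtain ⟨x, hx⟩ := gridCell_nonempty hε p
    obtain rfl : α = β := (hp' x hx).symm.trans (hp x hx)
    have hq := gridCell_subset_gridCube_self hε q (Nat.le_add_left 1 L)
    exact no_beta q hq (cells_alpha q hq)
  have hA : IsAlphaCube ε α V q (L + 1) := (isAlphaCube_iff hε hV).2 ⟨by omega, cells_alpha⟩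
  rcases hL with ⟨-, upper⟩ | ⟨none, -⟩
  · obtain ⟨q', m', hmax, -, hle⟩ := hA.exists_isMaxAlphaCube hε hn hV hpα
    have : m' ≤ L := upper ⟨q', hmax⟩
    omega
  · exact none _ _ hA

theorem gridCube_ceil_subset_Icc (hε : 0 < ε) (x : Fin d → ℝ) (m : ℕ) :
    gridCube ε (fun i => ⌈x i / ε⌉) m ⊆ Set.Icc x fun i => x i + (m + 1) * ε := by
  rw [gridCube_eq_Icc]
  refine Set.Icc_subset_Icc (fun i => (div_le_iff₀ hε).1 (Int.le_ceil _)) fun i => ?_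
  have ceil_le : (⌈x i / ε⌉ : ℝ) * ε ≤ x i + ε := by
    have := mul_le_mul_of_nonneg_right (Int.ceil_lt_add_one (x i / ε)).le hε.le
    rwa [add_mul, div_mul_cancel₀ _ hε.ne', one_mul] at this
  simp only
  linarith

theorem IsValleyWidth.exists_cellCore_subset_Icc (hL : IsValleyWidth ε α V L) (hε : 0 < ε)
    (hn : ε * n = 1) (hV : IsGridPotential ε α β V) (hp : IsValueCell ε β V p)
    (x : Fin d → ℝ) :
    ∃ r, IsValueCell ε β V r ∧ cellCore ε r ⊆ Set.Icc x fun i => x i + (L + 2) * ε := by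
  obtain ⟨r, hsub, hr⟩ := hL.exists_isValueCell hε hn hV hp fun i => ⌈x i / ε⌉
  refine ⟨r, hr, ((cellCore_subset_gridCell hε r).trans hsub).trans ?_⟩
  have := gridCube_ceil_subset_Icc hε x (L + 1)
  push_cast at this
  rwa [add_assoc, one_add_one_eq_two] at this

end Grid


section Cutoff

variable {d : ℕ} {ε Cη α β : ℝ} {V η v : (Fin d → ℝ) → ℝ} {q : Fin d → ℤ} {K : NNReal}

theorem ZPeriodic.mul (hη : ZPeriodic η) (hv : ZPeriodic v) :
    ZPeriodic fun x => η x * v x :=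
  fun x k => by simp only [hη x k, hv x k]

theorem IsCutoff.lipschitzWith (hη : IsCutoff ε Cη α β V η) :
    LipschitzWith (Cη / ε).toNNReal η :=
  lipschitzWith_of_nnnorm_fderiv_le (𝕜 := ℝ) (hη.contDiff.differentiable one_ne_zero)
    fun x => NNReal.le_toNNReal_of_coe_le (hη.grad_le x)

theorem IsCutoff.exists_lipschitzWith_mul (hη : IsCutoff ε Cη α β V η) (hper : ZPeriodic v)
    (hv : LipschitzWith K v) : ∃ K', LipschitzWith K' fun x => η x * v x := by
  obtain ⟨B, hB⟩ := hper.exists_nnnorm_le hv.continuous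
  have η_le_one (x : Fin d → ℝ) : ‖η x‖ ≤ 1 := by
    rw [Real.norm_of_nonneg (hη.mem_Icc x).1]
    exact (hη.mem_Icc x).2
  exact ⟨_, lipschitzWith_mul_of_nnnorm_le (A := 1) hη.lipschitzWith hv η_le_one hB⟩

theorem IsCutoff.eq_zero_of_mem_cellCore (hη : IsCutoff ε Cη α β V η)
    (hq : IsValueCell ε β V q) {x : Fin d → ℝ} (hx : x ∈ cellCore ε q) : η x = 0 :=
  hη.eq_zero q hq x fun i => ⟨hx.1 i, hx.2 i⟩

theorem IsCutoff.not_isValueCell (hη : IsCutoff ε Cη α β V η) (hε : 0 < ε)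
    (hq : IsValueCell ε β V q) : ¬ IsValueCell ε α V q := fun hqα => by
  obtain ⟨x, hx⟩ := cellCore_nonempty hε q
  have zero_eq_one := (hη.eq_zero_of_mem_cellCore hq hx).symm.trans
    (hη.eq_one q hqα x (cellCore_subset_gridCell hε q hx))
  exact zero_ne_one zero_eq_one

end Cutoff

theorem statement0_general {d n L : ℕ} {ε α β : ℝ} {V w : (Fin d → ℝ) → ℝ} {p : Fin d → ℤ}
    {K : NNReal} (hε : 0 < ε) (hn : ε * n = 1) (hV : IsGridPotential ε α β V)
    (hp : IsValueCell ε β V p) (hL : IsValleyWidth ε α V L) (hper : ZPeriodic w)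
    (hw : LipschitzWith K w)
    (hzero : ∀ q, IsValueCell ε β V q → ∀ x ∈ cellCore ε q, w x = 0) :
    √(l2sq w) ≤ 3 * √(d * 6 ^ d) * √((L : ℝ) ^ d) * (ε * L) * √(gradL2sq w) := by
  have one_le_L : (1 : ℝ) ≤ L := mod_cast hL.one_le
  have gradL2sq_nonneg : 0 ≤ gradL2sq w := integral_nonneg (gradSq_nonneg w)
  have zeros (x : Fin d → ℝ) : ENNReal.ofReal ((ε / 2) ^ d) ≤
      volume ((Set.Icc x fun i => x i + (L + 2) * ε) ∩ {y | w y = 0}) := by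
    obtain ⟨r, hr, hsub⟩ := hL.exists_cellCore_subset_Icc hε hn hV hp x
    rw [ENNReal.ofReal_pow (by positivity), ← volume_cellCore ε r]
    exact measure_mono (Set.subset_inter hsub (hzero r hr))
  have side_le : (L + 2) * ε ≤ 3 * (ε * L) := by nlinarith
  have volume_ratio : (3 * (ε * L)) ^ d = (ε / 2) ^ d * 6 ^ d * (L : ℝ) ^ d := by
    rw [← mul_pow, ← mul_pow]; ring_nf
  have scaled : (ε / 2) ^ d * l2sq w ≤
      (ε / 2) ^ d * ((3 * (ε * L)) ^ 2 * (d * 6 ^ d) * (L : ℝ) ^ d * gradL2sq w) := calc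
    (ε / 2) ^ d * l2sq w
    _ ≤ d * ((L + 2) * ε) ^ 2 * ((L + 2) * ε) ^ d * gradL2sq w :=
        mul_l2sq_le_of_le_volume_zeros hw hper (by positivity) (by positivity) zeros
    _ ≤ d * (3 * (ε * L)) ^ 2 * (3 * (ε * L)) ^ d * gradL2sq w := by gcongr
    _ = (ε / 2) ^ d * ((3 * (ε * L)) ^ 2 * (d * 6 ^ d) * (L : ℝ) ^ d * gradL2sq w) := by
        rw [volume_ratio]; ring
  calc √(l2sq w)
    _ ≤ √((3 * (ε * L)) ^ 2 * (d * 6 ^ d) * (L : ℝ) ^ d * gradL2sq w) :=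
        Real.sqrt_le_sqrt (le_of_mul_le_mul_left scaled (by positivity))
    _ = 3 * (ε * L) * √(d * 6 ^ d) * √((L : ℝ) ^ d) * √(gradL2sq w) := by
        rw [Real.sqrt_mul (by positivity), Real.sqrt_mul (by positivity),
          Real.sqrt_mul (by positivity), Real.sqrt_sq (by positivity)]
    _ = 3 * √(d * 6 ^ d) * √((L : ℝ) ^ d) * (ε * L) * √(gradL2sq w) := by ring

/-- Lemma 2.3 of the paper: Friedrichs-type inequality for truncated
functions. If the β-region is nonempty and `η` is a cut-off function with constant `Cη`,
then there is a constant `C = C(d, Cη)` such that every periodic Lipschitz `v : ℝ^d → ℝ`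
satisfies `‖ηv‖ ≤ C · κ L^d · (εL) · ‖∇(ηv)‖_{L²([0,1)^d)}`. -/
theorem statement0 (d : ℕ) (hd : 1 ≤ d) (Cη : ℝ) :
    ∃ C : ℝ, 0 < C ∧
      ∀ (ε α β : ℝ) (V η : (Fin d → ℝ) → ℝ) (L κ : ℕ),
        0 < ε → (∃ n : ℕ, 0 < n ∧ ε * n = 1) →
        0 ≤ α → α ≤ β →
        IsGridPotential ε α β V →
        (∃ q : Fin d → ℤ, ∀ x ∈ gridCell ε q, V x = β) →
        IsCutoff ε Cη α β V η →
        IsValleyWidth ε α V L → IsOverlapNumber ε α V κ →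
        ∀ v : (Fin d → ℝ) → ℝ, ZPeriodic v → (∃ K : NNReal, LipschitzWith K v) →
          Real.sqrt (l2sq fun x => η x * v x) ≤
            C * ((κ : ℝ) * (L : ℝ) ^ d) * (ε * (L : ℝ)) *
              Real.sqrt (gradL2sq fun x => η x * v x) := by
  refine ⟨3 * √(d * 6 ^ d), by positivity, ?_⟩
  rintro ε α β V η L κ hε ⟨n, -, hn⟩ - - hV ⟨p, hp⟩ hη hL hκ v hper ⟨K, hv⟩
  obtain ⟨K', lipschitz⟩ := hη.exists_lipschitzWith_mul hper hv
  have one_le_κ : (1 : ℝ) ≤ κ := mod_cast hκ.one_le hε hn hV (hη.not_isValueCell hε hp)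
  have one_le_pow_L : (1 : ℝ) ≤ (L : ℝ) ^ d := one_le_pow₀ (mod_cast hL.one_le)
  have sqrt_le : √((L : ℝ) ^ d) ≤ κ * (L : ℝ) ^ d :=
    (Real.sqrt_le_iff.2 ⟨by positivity, le_self_pow₀ one_le_pow_L two_ne_zero⟩).trans
      (le_mul_of_one_le_left (by positivity) one_le_κ)
  calc √(l2sq fun x => η x * v x)
    _ ≤ 3 * √(d * 6 ^ d) * √((L : ℝ) ^ d) * (ε * L) * √(gradL2sq fun x => η x * v x) :=
        statement0_general hε hn hV hp hL (hη.periodic.mul hper) lipschitz fun q hq x hx => by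
          rw [hη.eq_zero_of_mem_cellCore hq hx, zero_mul]
    _ ≤ _ := by gcongr

end
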